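/- For all N ≥ 2 and all integers k ≥ 2, Q_k ≤ Q_{k+1}, where Q_k = (j²_{N/2−1} / (2 N ω_N G_N²)) · (ℓ_k² − N²/4) / ( ℓ_k + N/2 − j_{N/2−1} · J_{ℓ_k+1}(j_{N/2−1}) / J_{ℓ_k}(j_{N/2−1}) ) and ℓ_k = k + N/2 − 1. Consequently the infimum over k ≥ 2 of Q_k equals Q_2, which is the constant C_N. -/

import Mathlib

open MeasureTheory Metric Set Filter Topology
open scoped RealInnerProductSpace

noncomputable section

abbrev euc (N : ℕ) := EuclideanSpace ℝ (Fin N)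

/-- Bessel function of the first kind of order `ν`, via its power series. -/
def besselJ (ν : ℝ) (x : ℝ) : ℝ :=
  ∑' m : ℕ, ((-1 : ℝ) ^ m / (m.factorial * Real.Gamma (m + ν + 1))) *
    (x / 2) ^ (2 * (m : ℝ) + ν)

/-- First positive zero of the Bessel function `J_ν`. -/
def besselJzero (ν : ℝ) : ℝ := sInf {x : ℝ | 0 < x ∧ besselJ ν x = 0}

/-- Volume of the unit ball of `ℝ^N`. -/
def ballVol (N : ℕ) : ℝ := (volume (ball (0 : euc N) 1)).toReal

/-- Perimeter: `(N-1)`-dimensional Hausdorff measure of the topological boundary. -/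
def perim (N : ℕ) (Ω : Set (euc N)) : ℝ := (μH[(N : ℝ) - 1] (frontier Ω)).toReal

/-- First Dirichlet Laplacian eigenvalue: infimum of Rayleigh quotients over nonzero
smooth functions compactly supported in `Ω`. -/
def firstEigenvalue (N : ℕ) (Ω : Set (euc N)) : ℝ :=
  sInf { R : ℝ | ∃ u : euc N → ℝ, ContDiff ℝ (⊤ : ℕ∞) u ∧ HasCompactSupport u ∧
    tsupport u ⊆ Ω ∧ u ≠ 0 ∧
    R = (∫ x, ‖gradient u x‖ ^ 2) / (∫ x, u x ^ 2) }

/-- Radius of the ball `Ω♯` with the same Lebesgue measure as `Ω`. -/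
def sharpRadius (N : ℕ) (Ω : Set (euc N)) : ℝ :=
  ((volume Ω).toReal / ballVol N) ^ ((1 : ℝ) / N)

/-- Isoperimetric deficit `δP(Ω) = Per(Ω)/Per(Ω♯) - 1`. -/
def perDeficit (N : ℕ) (Ω : Set (euc N)) : ℝ :=
  perim N Ω / perim N (ball (0 : euc N) (sharpRadius N Ω)) - 1

/-- Faber-Krahn deficit `δλ(Ω) = λ(Ω)/λ(Ω♯) - 1`. -/
def fkDeficit (N : ℕ) (Ω : Set (euc N)) : ℝ :=
  firstEigenvalue N Ω / firstEigenvalue N (ball (0 : euc N) (sharpRadius N Ω)) - 1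

/-- A one-parameter family `Ω t` of subsets of `ℝ^N` smoothly converges to `Ω₀` as `t → 0`. -/
structure SmoothlyConverges (N : ℕ) (Ω : ℝ → Set (euc N)) (Ω₀ : Set (euc N)) where
  δ : ℝ
  δ_pos : 0 < δ
  Φ : ℝ → euc N → euc N
  Φinv : ℝ → euc N → euc N
  left_inv : ∀ t ∈ Ico (0 : ℝ) δ, Function.LeftInverse (Φinv t) (Φ t)
  right_inv : ∀ t ∈ Ico (0 : ℝ) δ, Function.RightInverse (Φinv t) (Φ t)
  smooth_x : ∀ t ∈ Ico (0 : ℝ) δ, ContDiff ℝ (⊤ : ℕ∞) (Φ t)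
  smooth_x_inv : ∀ t ∈ Ico (0 : ℝ) δ, ContDiff ℝ (⊤ : ℕ∞) (Φinv t)
  smooth_t : ∀ x, ContDiffOn ℝ (⊤ : ℕ∞) (fun t => Φ t x) (Ico (0 : ℝ) δ)
  smooth_t_inv : ∀ x, ContDiffOn ℝ (⊤ : ℕ∞) (fun t => Φinv t x) (Ico (0 : ℝ) δ)
  init : Ω 0 = Ω₀
  image : ∀ t ∈ Ico (0 : ℝ) δ, Ω t = Φ t '' Ω₀

/-- The Laplacian of `f : ℝ^N → ℝ`, as the trace of the second derivative. -/
def lap (N : ℕ) (f : euc N → ℝ) (x : euc N) : ℝ :=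
  ∑ i : Fin N,
    iteratedFDeriv ℝ 2 f x ![EuclideanSpace.single i 1, EuclideanSpace.single i 1]

/-- The divergence of a vector field on `ℝ^N`. -/
def diver (N : ℕ) (f : euc N → euc N) (x : euc N) : ℝ :=
  ∑ i : Fin N, ⟪fderiv ℝ f x (EuclideanSpace.single i 1), (EuclideanSpace.single i 1 : euc N)⟫

/-- The constant `G_N`: the modulus of the gradient on the boundary of the normalized first
eigenfunction of the unit ball. -/
def GN (N : ℕ) : ℝ :=
  (besselJzero ((N : ℝ) / 2 - 1)) ^ 2 *
      deriv (besselJ ((N : ℝ) / 2 - 1)) (besselJzero ((N : ℝ) / 2 - 1)) /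
    Real.sqrt (N * ballVol N *
      ∫ r in (0 : ℝ)..(besselJzero ((N : ℝ) / 2 - 1)), r * besselJ ((N : ℝ) / 2 - 1) r ^ 2)

/-- The optimal constant `C_N` of the paper. -/
def CN (N : ℕ) : ℝ :=
  (N * (N + 1) *
      ∫ r in (0 : ℝ)..(besselJzero ((N : ℝ) / 2 - 1)), r * besselJ ((N : ℝ) / 2 - 1) r ^ 2) /
    (2 * (besselJzero ((N : ℝ) / 2 - 1) *
        deriv (besselJ ((N : ℝ) / 2 - 1)) (besselJzero ((N : ℝ) / 2 - 1))) ^ 2 *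
      ((besselJzero ((N : ℝ) / 2 - 1)) ^ 2 - N))

end

noncomputable section

/-- The sequence `Q_k` of Lemma 2.3:
`Q_k = (j²_{N/2-1}/(2Nω_N G_N²)) (ℓ_k² - N²/4)/(ℓ_k + N/2 - j_{N/2-1} J_{ℓ_k+1}(j)/J_{ℓ_k}(j))`
with `ℓ_k = k + N/2 - 1`. -/
def Qseq (N : ℕ) (k : ℕ) : ℝ :=
  besselJzero ((N : ℝ) / 2 - 1) ^ 2 / (2 * N * ballVol N * GN N ^ 2) *
    ((((k : ℝ) + N / 2 - 1) ^ 2 - (N : ℝ) ^ 2 / 4) /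
      (((k : ℝ) + N / 2 - 1) + N / 2 -
        besselJzero ((N : ℝ) / 2 - 1) *
            besselJ (((k : ℝ) + N / 2 - 1) + 1) (besselJzero ((N : ℝ) / 2 - 1)) /
          besselJ ((k : ℝ) + N / 2 - 1) (besselJzero ((N : ℝ) / 2 - 1))))

end

/-!
Write `a = N / 2`, `j = j_{a-1}` and `ℓ = ℓ_k`. Since `J_{a-1}(j) = 0`, the three-term recurrence
turns the denominator `ℓ + a - j J_{ℓ+1}(j) / J_ℓ(j)` of `Q_k` into `W(j) / (J_a(j) J_ℓ(j))`, where
`W(x) = x (J_a J_ℓ' - J_a' J_ℓ)(x)`. Bessel's equation gives `W' = (ℓ² - a²) J_a J_ℓ / x`, so the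
factor of `Q_k` depending on `k` is

  `J_a(j) / ∫_0^j (J_a(t) / t) (J_ℓ(t) / J_ℓ(j)) dt`.

The same Wronskian identity shows that `J_c / J_b` is increasing on `(0, j]` for `b < c`, hence
`J_ℓ(t) / J_ℓ(j)` decreases, and `Q_k` increases, with `ℓ`. For `k = 2` the recurrence at `j`
evaluates `Q_2` in closed form.
-/

noncomputable section

/-! ### The Bessel–Clifford function -/

/-- The `m`-th Taylor coefficient of the Bessel–Clifford function of order `ν`. Mathlib's `Γ`
vanishes at its poles, so the coefficient there is the correct value `1 / Γ = 0`. -/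
def besselCliffordCoeff (ν : ℝ) (m : ℕ) : ℝ := (m.factorial * Real.Gamma (m + ν + 1))⁻¹

/-- The Bessel–Clifford function of order `ν`: the entire function `C_ν` with
`J_ν(x) = (x / 2) ^ ν * C_ν(-x² / 4)`, through which the power series of `J_ν` is studied. -/
def besselClifford (ν y : ℝ) : ℝ := ∑' m : ℕ, besselCliffordCoeff ν m * y ^ m

lemma besselCliffordCoeff_eq_mul_order_add_one (ν : ℝ) (m : ℕ) :
    besselCliffordCoeff ν m = (m + ν + 1) * besselCliffordCoeff (ν + 1) m := by
  unfold besselCliffordCoeff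
  rw [← add_assoc (m : ℝ) ν 1]
  rcases eq_or_ne ((m : ℝ) + ν + 1) 0 with hpole | hpole
  · simp [hpole]
  · rw [Real.Gamma_add_one hpole]
    field_simp

lemma succ_mul_besselCliffordCoeff_succ (ν : ℝ) (m : ℕ) :
    (m + 1) * besselCliffordCoeff ν (m + 1) = besselCliffordCoeff (ν + 1) m := by
  have hm : (m : ℝ) + 1 ≠ 0 := by positivity
  have hΓ : ((m + 1 : ℕ) : ℝ) + ν + 1 = m + (ν + 1) + 1 := by push_cast; ring
  unfold besselCliffordCoeff
  rw [hΓ, Nat.factorial_succ, Nat.cast_mul, Nat.cast_succ]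
  field_simp

lemma summable_besselCliffordCoeff_mul_pow (ν y : ℝ) :
    Summable fun m : ℕ ↦ besselCliffordCoeff ν m * y ^ m := by
  refine (Real.summable_pow_div_factorial |y|).of_norm_bounded_eventually_nat ?_
  filter_upwards [eventually_ge_atTop ⌈1 - ν⌉₊] with m hm
  have h_two_le : 2 ≤ (m : ℝ) + ν + 1 := by linarith [Nat.ceil_le.1 hm]
  have h_one_le : 1 ≤ Real.Gamma (m + ν + 1) := by
    simpa only [Real.Gamma_two] using
      Real.Gamma_strictMonoOn_Ici.monotoneOn self_mem_Ici h_two_le h_two_le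
  have hm! : (0 : ℝ) < m.factorial := by positivity
  have h_coeff : besselCliffordCoeff ν m ≤ (m.factorial : ℝ)⁻¹ :=
    inv_anti₀ hm! (le_mul_of_one_le_right hm!.le h_one_le)
  have h_nonneg : 0 ≤ besselCliffordCoeff ν m := by unfold besselCliffordCoeff; positivity
  rw [norm_mul, norm_pow, Real.norm_of_nonneg h_nonneg, Real.norm_eq_abs, div_eq_inv_mul]
  gcongr

lemma hasSum_natCast_mul_besselCliffordCoeff_mul_pow (ν y : ℝ) :
    HasSum (fun m : ℕ ↦ m * besselCliffordCoeff ν m * y ^ m) (y * besselClifford (ν + 1) y) := by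
  rw [← hasSum_nat_add_iff' 1]
  simp only [Finset.range_one, Finset.sum_singleton, Nat.cast_zero, zero_mul, sub_zero]
  refine ((summable_besselCliffordCoeff_mul_pow (ν + 1) y).hasSum.mul_left y).congr_fun fun m ↦ ?_
  rw [← succ_mul_besselCliffordCoeff_succ, Nat.cast_succ]
  ring

lemma besselClifford_eq_add (ν y : ℝ) :
    besselClifford ν y = (ν + 1) * besselClifford (ν + 1) y + y * besselClifford (ν + 2) y := by
  have h_sum := ((summable_besselCliffordCoeff_mul_pow (ν + 1) y).hasSum.mul_left (ν + 1)).add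
    (hasSum_natCast_mul_besselCliffordCoeff_mul_pow (ν + 1) y)
  rw [add_assoc ν, one_add_one_eq_two] at h_sum
  refine HasSum.tsum_eq (h_sum.congr_fun fun m ↦ ?_)
  rw [besselCliffordCoeff_eq_mul_order_add_one ν m]
  ring

lemma hasDerivAt_besselClifford (ν y : ℝ) :
    HasDerivAt (besselClifford ν) (besselClifford (ν + 1) y) y := by
  set R := |y| + 1
  have h_shift (z : ℝ) (m : ℕ) : besselCliffordCoeff ν (m + 1) * (↑(m + 1) * z ^ (m + 1 - 1)) =
      besselCliffordCoeff (ν + 1) m * z ^ m := by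
    rw [← succ_mul_besselCliffordCoeff_succ, Nat.cast_succ, Nat.add_sub_cancel]
    ring
  have h_summable (z : ℝ) :
      Summable fun m : ℕ ↦ besselCliffordCoeff ν m * (m * z ^ (m - 1)) := by
    rw [← summable_nat_add_iff 1]
    exact (summable_besselCliffordCoeff_mul_pow (ν + 1) z).congr fun m ↦ (h_shift z m).symm
  have h_bound (m : ℕ) (z : ℝ) (hz : z ∈ ball 0 R) :
      ‖besselCliffordCoeff ν m * (m * z ^ (m - 1))‖ ≤
        ‖besselCliffordCoeff ν m * (m * R ^ (m - 1))‖ := by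
    have hzR : ‖z‖ ≤ ‖R‖ := (mem_ball_zero_iff.1 hz).le.trans (Real.le_norm_self R)
    simp only [norm_mul, norm_pow]
    gcongr
  have h_deriv : HasDerivAt (besselClifford ν)
      (∑' m : ℕ, besselCliffordCoeff ν m * (m * y ^ (m - 1))) y :=
    hasDerivAt_tsum_of_isPreconnected (h_summable R).norm isOpen_ball
      (convex_ball (0 : ℝ) R).isPreconnected (fun m z _ ↦ (hasDerivAt_pow m z).const_mul _) h_bound
      (mem_ball_self (by positivity)) (summable_besselCliffordCoeff_mul_pow ν 0)
      (mem_ball_zero_iff.2 (lt_add_one |y|))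
  refine h_deriv.congr_deriv ?_
  rw [(h_summable y).tsum_eq_zero_add, Nat.cast_zero, zero_mul, mul_zero, zero_add]
  exact tsum_congr (h_shift y)

lemma continuous_besselClifford (ν : ℝ) : Continuous (besselClifford ν) :=
  continuous_iff_continuousAt.2 fun y ↦ (hasDerivAt_besselClifford ν y).continuousAt

lemma besselClifford_zero_pos {ν : ℝ} (hν : -1 < ν) : 0 < besselClifford ν 0 := by
  have hΓ : 0 < Real.Gamma (ν + 1) := Real.Gamma_pos_of_pos (by linarith)
  unfold besselClifford
  rw [tsum_eq_single 0 fun m hm ↦ by rw [zero_pow hm, mul_zero]]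
  simpa [besselCliffordCoeff] using hΓ

/-! ### Analytic properties of `J_ν` -/

lemma besselJ_eq_rpow_mul_besselClifford (ν : ℝ) {x : ℝ} (hx : 0 < x) :
    besselJ ν x = (x / 2) ^ ν * besselClifford ν (-(x ^ 2 / 4)) := by
  unfold besselJ besselClifford
  rw [← tsum_mul_left]
  refine tsum_congr fun m ↦ ?_
  have h_pow : (x / 2) ^ (2 * (m : ℝ)) = (x ^ 2 / 4) ^ m := by
    rw [Real.rpow_mul (by positivity), Real.rpow_natCast, Real.rpow_two]
    ring
  rw [Real.rpow_add (by positivity), h_pow, neg_pow (x ^ 2 / 4), besselCliffordCoeff]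
  ring

lemma besselJ_zero_right {ν : ℝ} (hν : 0 < ν) : besselJ ν 0 = 0 := by
  have h_ne (m : ℕ) : 2 * (m : ℝ) + ν ≠ 0 := by positivity
  simp [besselJ, Real.zero_rpow (h_ne _)]

lemma hasDerivAt_besselJ (ν : ℝ) {x : ℝ} (hx : 0 < x) :
    HasDerivAt (besselJ ν) (ν / x * besselJ ν x - besselJ (ν + 1) x) x := by
  have hx2 : 0 < x / 2 := by positivity
  have h_rpow : HasDerivAt (fun t : ℝ ↦ (t / 2) ^ ν) (1 / 2 * ν * (x / 2) ^ (ν - 1)) x :=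
    ((hasDerivAt_id x).div_const 2).rpow_const (Or.inl hx2.ne')
  have h_arg : HasDerivAt (fun t : ℝ ↦ -(t ^ 2 / 4)) (-(x / 2)) x :=
    ((hasDerivAt_pow 2 x).div_const 4).neg.congr_deriv (by norm_num; ring)
  have h_prod := h_rpow.mul ((hasDerivAt_besselClifford ν _).comp x h_arg)
  have h_eq : besselJ ν =ᶠ[𝓝 x] fun t ↦ (t / 2) ^ ν * besselClifford ν (-(t ^ 2 / 4)) := by
    filter_upwards [lt_mem_nhds hx] with t ht using besselJ_eq_rpow_mul_besselClifford ν ht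
  refine (h_prod.congr_of_eventuallyEq h_eq).congr_deriv ?_
  rw [besselJ_eq_rpow_mul_besselClifford _ hx, besselJ_eq_rpow_mul_besselClifford _ hx,
    Real.rpow_sub_one hx2.ne', Real.rpow_add_one hx2.ne', Function.comp_apply]
  field_simp
  ring

lemma besselJ_add_two (ν : ℝ) {x : ℝ} (hx : 0 < x) :
    besselJ (ν + 2) x = 2 * (ν + 1) / x * besselJ (ν + 1) x - besselJ ν x := by
  have hx2 : 0 < x / 2 := by positivity
  simp only [besselJ_eq_rpow_mul_besselClifford _ hx, Real.rpow_add hx2, Real.rpow_one,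
    Real.rpow_two, besselClifford_eq_add ν]
  field_simp
  ring

lemma hasDerivAt_besselJ_add_one (ν : ℝ) {x : ℝ} (hx : 0 < x) :
    HasDerivAt (besselJ (ν + 1)) (besselJ ν x - (ν + 1) / x * besselJ (ν + 1) x) x := by
  refine (hasDerivAt_besselJ (ν + 1) hx).congr_deriv ?_
  rw [add_assoc ν, one_add_one_eq_two, besselJ_add_two ν hx]
  field_simp
  ring

lemma continuousOn_besselJ_Ioi (ν : ℝ) : ContinuousOn (besselJ ν) (Ioi 0) :=
  fun _ hx ↦ (hasDerivAt_besselJ ν hx).continuousAt.continuousWithinAt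

lemma continuousOn_besselJ_Ici {ν : ℝ} (hν : 0 < ν) : ContinuousOn (besselJ ν) (Ici 0) := by
  have h_rpow : Continuous fun x : ℝ ↦ (x / 2) ^ ν :=
    (continuous_id.div_const 2).rpow_const fun _ ↦ Or.inr hν.le
  have h_cont : Continuous fun x : ℝ ↦ (x / 2) ^ ν * besselClifford ν (-(x ^ 2 / 4)) :=
    h_rpow.mul ((continuous_besselClifford ν).comp (by fun_prop))
  refine h_cont.continuousOn.congr fun x hx ↦ ?_
  rcases (mem_Ici.1 hx).eq_or_lt with rfl | hx
  · simp [besselJ_zero_right hν, Real.zero_rpow hν.ne']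
  · exact besselJ_eq_rpow_mul_besselClifford ν hx

lemma intervalIntegrable_rpow_mul_besselJ_mul_besselJ {s a b : ℝ} (h : -1 < s + a + b) {x : ℝ}
    (hx : 0 ≤ x) :
    IntervalIntegrable (fun t ↦ t ^ s * (besselJ a t * besselJ b t)) volume 0 x := by
  have h_cont : Continuous fun t : ℝ ↦ (1 / 2) ^ a * (1 / 2) ^ b *
      (besselClifford a (-(t ^ 2 / 4)) * besselClifford b (-(t ^ 2 / 4))) :=
    continuous_const.mul (((continuous_besselClifford a).comp (by fun_prop)).mul
      ((continuous_besselClifford b).comp (by fun_prop)))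
  refine ((intervalIntegral.intervalIntegrable_rpow' h).mul_continuousOn
    h_cont.continuousOn).congr fun t ht ↦ ?_
  have ht0 : 0 < t := (uIoc_of_le hx ▸ ht).1
  have h_half : t / 2 = t * (1 / 2) := by ring
  simp only [besselJ_eq_rpow_mul_besselClifford _ ht0, h_half, Real.rpow_add ht0,
    Real.mul_rpow ht0.le one_half_pos.le]
  ring

/-! ### The first positive zero of `J_ν` -/

lemma eventually_besselJ_pos {ν : ℝ} (hν : -1 < ν) : ∀ᶠ x in 𝓝[>] 0, 0 < besselJ ν x := by
  have h_cont : ContinuousAt (fun x : ℝ ↦ besselClifford ν (-(x ^ 2 / 4))) 0 :=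
    ((continuous_besselClifford ν).comp (by fun_prop)).continuousAt
  have h_zero : 0 < besselClifford ν (-((0 : ℝ) ^ 2 / 4)) := by
    simpa using besselClifford_zero_pos hν
  filter_upwards [self_mem_nhdsWithin, nhdsWithin_le_nhds (h_cont.eventually_const_lt h_zero)]
    with x hx h_pos
  rw [besselJ_eq_rpow_mul_besselClifford ν hx]
  exact mul_pos (Real.rpow_pos_of_pos (half_pos hx) ν) h_pos

lemma besselJ_pos_of_forall_ne_zero {ν : ℝ} (hν : -1 < ν) {x : ℝ} (hx : 0 < x)
    (h_ne : ∀ t ∈ Ioc 0 x, besselJ ν t ≠ 0) : 0 < besselJ ν x := by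
  obtain ⟨y, hy_pos, hy⟩ := ((eventually_besselJ_pos hν).and (Ioo_mem_nhdsGT hx)).exists
  by_contra! h_nonpos
  have h_sub : Icc y x ⊆ Ioc 0 x := fun t ht ↦ ⟨hy.1.trans_le ht.1, ht.2⟩
  obtain ⟨t, ht, ht_zero⟩ := intermediate_value_Icc' hy.2.le
    ((continuousOn_besselJ_Ioi ν).mono fun t ht ↦ (h_sub ht).1) ⟨h_nonpos, hy_pos.le⟩
  exact h_ne t (h_sub ht) ht_zero

lemma hasDerivAt_rpow_mul_besselJ_add_one (ν : ℝ) {x : ℝ} (hx : 0 < x) :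
    HasDerivAt (fun t ↦ t ^ (ν + 1) * besselJ (ν + 1) t) (x ^ (ν + 1) * besselJ ν x) x := by
  refine ((Real.hasDerivAt_rpow_const (Or.inl hx.ne')).mul
    (hasDerivAt_besselJ_add_one ν hx)).congr_deriv ?_
  rw [Real.rpow_sub_one hx.ne']
  field_simp
  ring

lemma besselJ_add_one_pos {ν : ℝ} (hν : -1 < ν) {x : ℝ} (hx : 0 < x)
    (h_pos : ∀ t ∈ Ioo 0 x, 0 < besselJ ν t) : 0 < besselJ (ν + 1) x := by
  have hν1 : 0 < ν + 1 := by linarith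
  have h_cont : ContinuousOn (fun t ↦ t ^ (ν + 1) * besselJ (ν + 1) t) (Icc 0 x) :=
    (Real.continuous_rpow_const hν1.le).continuousOn.mul
      ((continuousOn_besselJ_Ici hν1).mono Icc_subset_Ici_self)
  have h_mono : StrictMonoOn (fun t ↦ t ^ (ν + 1) * besselJ (ν + 1) t) (Icc 0 x) := by
    refine strictMonoOn_of_deriv_pos (convex_Icc 0 x) h_cont fun t ht ↦ ?_
    rw [interior_Icc] at ht
    rw [(hasDerivAt_rpow_mul_besselJ_add_one ν ht.1).deriv]
    exact mul_pos (Real.rpow_pos_of_pos ht.1 _) (h_pos t ht)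
  have h_lt := h_mono (left_mem_Icc.2 hx.le) (right_mem_Icc.2 hx.le) hx
  simp only [Real.zero_rpow hν1.ne', zero_mul] at h_lt
  exact pos_of_mul_pos_right h_lt (Real.rpow_nonneg hx.le _)

lemma hasDerivAt_besselJ_div_besselJ_add_one {ν x : ℝ} (hx : 0 < x)
    (h_ne : besselJ (ν + 1) x ≠ 0) :
    HasDerivAt (fun t ↦ besselJ ν t / besselJ (ν + 1) t)
      ((2 * ν + 1) / x * (besselJ ν x / besselJ (ν + 1) x) - 1 -
        (besselJ ν x / besselJ (ν + 1) x) ^ 2) x := by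
  refine ((hasDerivAt_besselJ ν hx).div (hasDerivAt_besselJ_add_one ν hx) h_ne).congr_deriv ?_
  field_simp
  ring

lemma deriv_besselJ_div_besselJ_add_one_le {ν x : ℝ} (hx : 0 < x) (hνx : |2 * ν + 1| ≤ x)
    (h_ne : besselJ (ν + 1) x ≠ 0) :
    deriv (fun t ↦ besselJ ν t / besselJ (ν + 1) t) x ≤ -(1 / 2) := by
  have h_abs : |(2 * ν + 1) / x| ≤ 1 := by
    rw [abs_div, abs_of_pos hx]
    exact div_le_one_of_le₀ hνx hx.le
  have h_sq : ((2 * ν + 1) / x) ^ 2 ≤ 1 := (sq_le_one_iff_abs_le_one _).2 h_abs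
  rw [(hasDerivAt_besselJ_div_besselJ_add_one hx h_ne).deriv]
  set V := besselJ ν x / besselJ (ν + 1) x
  linarith [sq_nonneg ((2 * ν + 1) / x - V), sq_nonneg V]

-- Otherwise `J_ν / J_{ν+1}` would stay positive with derivative at most `-1/2` from `|2ν + 1|` on.
lemma exists_besselJ_eq_zero {ν : ℝ} (hν : -1 < ν) : ∃ x, 0 < x ∧ besselJ ν x = 0 := by
  by_contra! h_ne
  have hJ (x : ℝ) (hx : 0 < x) : 0 < besselJ ν x :=
    besselJ_pos_of_forall_ne_zero hν hx fun t ht ↦ h_ne t ht.1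
  have hJ' (x : ℝ) (hx : 0 < x) : 0 < besselJ (ν + 1) x :=
    besselJ_add_one_pos hν hx fun t ht ↦ hJ t ht.1
  set V : ℝ → ℝ := fun t ↦ besselJ ν t / besselJ (ν + 1) t
  have hV_pos (x : ℝ) (hx : 0 < x) : 0 < V x := div_pos (hJ x hx) (hJ' x hx)
  have hV_diff (x : ℝ) (hx : 0 < x) : DifferentiableAt ℝ V x :=
    (hasDerivAt_besselJ_div_besselJ_add_one hx (hJ' x hx).ne').differentiableAt
  set x₀ := |2 * ν + 1| + 1
  have h_Ici {x : ℝ} (hx : x ∈ Ici x₀) : 0 < x := (by positivity : 0 < x₀).trans_le hx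
  set x₁ := x₀ + 2 * V x₀
  have hx₁ : x₀ ≤ x₁ := by linarith [hV_pos x₀ (h_Ici self_mem_Ici)]
  have h_drop : V x₁ - V x₀ ≤ -(1 / 2) * (x₁ - x₀) := by
    refine (convex_Ici x₀).image_sub_le_mul_sub_of_deriv_le
      (fun x hx ↦ (hV_diff x (h_Ici hx)).continuousAt.continuousWithinAt)
      (fun x hx ↦ (hV_diff x (h_Ici (interior_subset hx))).differentiableWithinAt)
      (fun x hx ↦ ?_) x₀ self_mem_Ici x₁ hx₁ hx₁
    have hx : x₀ ≤ x := interior_subset hx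
    exact deriv_besselJ_div_besselJ_add_one_le (h_Ici hx) (by linarith) (hJ' x (h_Ici hx)).ne'
  linarith [hV_pos x₁ (h_Ici hx₁)]

lemma isLeast_besselJzero {ν : ℝ} (hν : -1 < ν) :
    IsLeast {x : ℝ | 0 < x ∧ besselJ ν x = 0} (besselJzero ν) := by
  obtain ⟨ε, hε, h_pos⟩ := mem_nhdsGT_iff_exists_Ioo_subset.1 (eventually_besselJ_pos hν)
  have h_eq : {x : ℝ | 0 < x ∧ besselJ ν x = 0} = Ici ε ∩ besselJ ν ⁻¹' {0} := by
    ext x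
    refine ⟨fun ⟨hx, h_zero⟩ ↦ ⟨?_, h_zero⟩, fun ⟨hx, h_zero⟩ ↦ ⟨hε.trans_le hx, h_zero⟩⟩
    by_contra hxε
    exact (h_pos ⟨hx, not_le.1 hxε⟩ : 0 < besselJ ν x).ne' h_zero
  have h_closed : IsClosed {x : ℝ | 0 < x ∧ besselJ ν x = 0} := by
    rw [h_eq]
    exact ((continuousOn_besselJ_Ioi ν).mono (Ici_subset_Ioi.2 hε)).preimage_isClosed_of_isClosed
      isClosed_Ici isClosed_singleton
  exact h_closed.isLeast_csInf (exists_besselJ_eq_zero hν) ⟨0, fun x hx ↦ hx.1.le⟩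

lemma besselJzero_pos {ν : ℝ} (hν : -1 < ν) : 0 < besselJzero ν := (isLeast_besselJzero hν).1.1

lemma besselJ_besselJzero {ν : ℝ} (hν : -1 < ν) : besselJ ν (besselJzero ν) = 0 :=
  (isLeast_besselJzero hν).1.2

lemma besselJ_pos_of_lt_besselJzero {ν : ℝ} (hν : -1 < ν) {x : ℝ}
    (hx : x ∈ Ioo 0 (besselJzero ν)) : 0 < besselJ ν x :=
  besselJ_pos_of_forall_ne_zero hν hx.1 fun _ ht h_zero ↦
    (ht.2.trans_lt hx.2).not_ge ((isLeast_besselJzero hν).2 ⟨ht.1, h_zero⟩)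

lemma besselJ_add_natCast_add_one_pos {ν : ℝ} (hν : -1 < ν) (n : ℕ) {x : ℝ}
    (hx : x ∈ Ioc 0 (besselJzero ν)) : 0 < besselJ (ν + n + 1) x := by
  induction n generalizing x with
  | zero =>
    rw [Nat.cast_zero, add_zero]
    exact besselJ_add_one_pos hν hx.1 fun t ht ↦
      besselJ_pos_of_lt_besselJzero hν ⟨ht.1, ht.2.trans_le hx.2⟩
  | succ n ih =>
    have h_order : -1 < ν + n + 1 := by linarith [n.cast_nonneg (α := ℝ)]
    rw [Nat.cast_succ, ← add_assoc ν]
    exact besselJ_add_one_pos h_order hx.1 fun t ht ↦ ih ⟨ht.1, ht.2.le.trans hx.2⟩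

/-! ### Wronskians and Sturm comparison -/

/-- `x` times the Wronskian `J_a J_b' - J_a' J_b` of two Bessel functions. The derivatives are
eliminated through `J_ν' = (ν / x) J_ν - J_{ν+1}`, so that the expression also makes sense
at `0`. -/
def besselWronskian (a b x : ℝ) : ℝ :=
  (b - a) * besselJ a x * besselJ b x - x * besselJ a x * besselJ (b + 1) x +
    x * besselJ (a + 1) x * besselJ b x

lemma hasDerivAt_besselWronskian (a b : ℝ) {x : ℝ} (hx : 0 < x) :
    HasDerivAt (besselWronskian a b)
      ((b ^ 2 - a ^ 2) * (besselJ a x * besselJ b x / x)) x := by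
  have ha := hasDerivAt_besselJ a hx
  have hb := hasDerivAt_besselJ b hx
  have ha' := hasDerivAt_besselJ_add_one a hx
  have hb' := hasDerivAt_besselJ_add_one b hx
  have h_id := hasDerivAt_id x
  refine HasDerivAt.congr_deriv (f := besselWronskian a b)
    ((((ha.const_mul (b - a)).mul hb).sub ((h_id.mul ha).mul hb')).add ((h_id.mul ha').mul hb)) ?_
  simp only [id, Pi.mul_apply]
  field_simp
  ring

lemma continuousOn_besselWronskian {a b : ℝ} (ha : 0 < a) (hb : 0 < b) :
    ContinuousOn (besselWronskian a b) (Ici 0) := by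
  have hJa := continuousOn_besselJ_Ici ha
  have hJb := continuousOn_besselJ_Ici hb
  have hJa' := continuousOn_besselJ_Ici (add_pos ha one_pos)
  have hJb' := continuousOn_besselJ_Ici (add_pos hb one_pos)
  unfold besselWronskian
  fun_prop

lemma intervalIntegrable_besselJ_mul_besselJ_div {a b : ℝ} (hab : 0 < a + b) {x : ℝ}
    (hx : 0 ≤ x) : IntervalIntegrable (fun t ↦ besselJ a t * besselJ b t / t) volume 0 x := by
  refine (intervalIntegrable_rpow_mul_besselJ_mul_besselJ (s := -1) (a := a) (b := b)
    (by linarith) hx).congr fun t _ ↦ ?_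
  simp only [Real.rpow_neg_one, inv_mul_eq_div]

lemma besselWronskian_eq_integral {a b : ℝ} (ha : 0 < a) (hb : 0 < b) {x : ℝ} (hx : 0 ≤ x) :
    besselWronskian a b x =
      (b ^ 2 - a ^ 2) * ∫ t in (0 : ℝ)..x, besselJ a t * besselJ b t / t := by
  have h_ftc := intervalIntegral.integral_eq_sub_of_hasDerivAt_of_le hx
    ((continuousOn_besselWronskian ha hb).mono Icc_subset_Ici_self)
    (fun t ht ↦ hasDerivAt_besselWronskian a b ht.1)
    ((intervalIntegrable_besselJ_mul_besselJ_div (add_pos ha hb) hx).const_mul _)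
  have h_zero : besselWronskian a b 0 = 0 := by simp [besselWronskian, besselJ_zero_right ha]
  rw [← intervalIntegral.integral_const_mul, h_ftc, h_zero, sub_zero]

section Comparison

variable {a b c j : ℝ}

lemma integral_besselJ_mul_besselJ_div_pos (hab : 0 < a + b) (hj : 0 < j)
    (hJa : ∀ x ∈ Ioo 0 j, 0 < besselJ a x) (hJb : ∀ x ∈ Ioo 0 j, 0 < besselJ b x) :
    0 < ∫ t in (0 : ℝ)..j, besselJ a t * besselJ b t / t :=
  intervalIntegral.intervalIntegral_pos_of_pos_on
    (intervalIntegrable_besselJ_mul_besselJ_div hab hj.le)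
    (fun t ht ↦ div_pos (mul_pos (hJa t ht) (hJb t ht)) ht.1) hj

lemma besselWronskian_pos (ha : 0 < a) (hab : a < b) (hj : 0 < j)
    (hJa : ∀ x ∈ Ioo 0 j, 0 < besselJ a x) (hJb : ∀ x ∈ Ioo 0 j, 0 < besselJ b x) :
    0 < besselWronskian a b j := by
  rw [besselWronskian_eq_integral ha (ha.trans hab) hj.le]
  exact mul_pos (sub_pos.2 (pow_lt_pow_left₀ hab ha.le two_ne_zero))
    (integral_besselJ_mul_besselJ_div_pos (by linarith) hj hJa hJb)

lemma hasDerivAt_besselJ_div_besselJ {x : ℝ} (hx : 0 < x) (h_ne : besselJ b x ≠ 0) :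
    HasDerivAt (fun t ↦ besselJ c t / besselJ b t)
      (besselWronskian b c x / (x * besselJ b x ^ 2)) x := by
  refine ((hasDerivAt_besselJ c hx).div (hasDerivAt_besselJ b hx) h_ne).congr_deriv ?_
  unfold besselWronskian
  field_simp
  ring

lemma monotoneOn_besselJ_div_besselJ (hb : 0 < b) (hbc : b < c)
    (hJb : ∀ x ∈ Ioc 0 j, 0 < besselJ b x) (hJc : ∀ x ∈ Ioc 0 j, 0 < besselJ c x) :
    MonotoneOn (fun t ↦ besselJ c t / besselJ b t) (Ioc 0 j) := by
  have h_deriv (t : ℝ) (ht : t ∈ Ioc 0 j) :=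
    hasDerivAt_besselJ_div_besselJ (c := c) ht.1 (hJb t ht).ne'
  refine monotoneOn_of_hasDerivWithinAt_nonneg (convex_Ioc 0 j)
    (fun t ht ↦ (h_deriv t ht).continuousAt.continuousWithinAt)
    (fun t ht ↦ (h_deriv t (interior_subset ht)).hasDerivWithinAt) fun t ht ↦ ?_
  obtain ⟨ht0, htj⟩ := interior_subset ht
  have h_sub : ∀ x ∈ Ioo 0 t, x ∈ Ioc 0 j := fun x hx ↦ ⟨hx.1, hx.2.le.trans htj⟩
  have h_pos := besselWronskian_pos hb hbc ht0 (fun x hx ↦ hJb x (h_sub x hx))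
    fun x hx ↦ hJc x (h_sub x hx)
  positivity

lemma besselJ_mul_integral_le (ha : 0 < a) (hb : 0 < b) (hbc : b < c) (hj : 0 < j)
    (hJa : ∀ x ∈ Ioc 0 j, 0 < besselJ a x) (hJb : ∀ x ∈ Ioc 0 j, 0 < besselJ b x)
    (hJc : ∀ x ∈ Ioc 0 j, 0 < besselJ c x) :
    besselJ b j * ∫ t in (0 : ℝ)..j, besselJ a t * besselJ c t / t ≤
      besselJ c j * ∫ t in (0 : ℝ)..j, besselJ a t * besselJ b t / t := by
  simp only [← intervalIntegral.integral_const_mul]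
  refine intervalIntegral.integral_mono_on_of_le_Ioo hj.le
    ((intervalIntegrable_besselJ_mul_besselJ_div (by linarith) hj.le).const_mul _)
    ((intervalIntegrable_besselJ_mul_besselJ_div (by linarith) hj.le).const_mul _) fun t ht ↦ ?_
  have ht' : t ∈ Ioc 0 j := Ioo_subset_Ioc_self ht
  have hj' : j ∈ Ioc 0 j := right_mem_Ioc.2 hj
  have h_ratio : besselJ c t * besselJ b j ≤ besselJ c j * besselJ b t :=
    (div_le_div_iff₀ (hJb t ht') (hJb j hj')).1
      (monotoneOn_besselJ_div_besselJ hb hbc hJb hJc ht' hj' ht.2.le)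
  calc besselJ b j * (besselJ a t * besselJ c t / t)
      = besselJ a t / t * (besselJ c t * besselJ b j) := by ring
    _ ≤ besselJ a t / t * (besselJ c j * besselJ b t) := by
        gcongr
        exact div_nonneg (hJa t ht').le ht.1.le
    _ = besselJ c j * (besselJ a t * besselJ b t / t) := by ring

/-- The quotient `(b² - a²) / (b + a - x J_{b+1}(x) / J_b(x))`. Up to a factor not depending on `k`,
`Q_k` is its value at `a = N / 2`, `b = ℓ_k` and `x = j_{N/2-1}`. -/
def besselQuotient (a b x : ℝ) : ℝ :=
  (b ^ 2 - a ^ 2) / (b + a - x * besselJ (b + 1) x / besselJ b x)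

lemma besselJ_add_one_of_besselJ_sub_one_eq_zero (hj : 0 < j) (h_zero : besselJ (a - 1) j = 0) :
    besselJ (a + 1) j = 2 * a / j * besselJ a j := by
  have h_rec := besselJ_add_two (a - 1) hj
  rwa [h_zero, sub_zero, sub_add_cancel, show a - 1 + 2 = a + 1 by ring] at h_rec

lemma add_sub_mul_besselJ_div_eq_besselWronskian_div (hj : 0 < j)
    (h_zero : besselJ (a - 1) j = 0) (hJa : besselJ a j ≠ 0) (hJb : besselJ b j ≠ 0) :
    b + a - j * besselJ (b + 1) j / besselJ b j =
      besselWronskian a b j / (besselJ a j * besselJ b j) := by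
  unfold besselWronskian
  rw [besselJ_add_one_of_besselJ_sub_one_eq_zero hj h_zero]
  field_simp
  ring

lemma besselQuotient_eq_div_integral (ha : 0 < a) (hab : a < b) (hj : 0 < j)
    (h_zero : besselJ (a - 1) j = 0) (hJa : besselJ a j ≠ 0) (hJb : besselJ b j ≠ 0) :
    besselQuotient a b j =
      besselJ a j * (besselJ b j / ∫ t in (0 : ℝ)..j, besselJ a t * besselJ b t / t) := by
  have h_sq : b ^ 2 - a ^ 2 ≠ 0 := (sub_pos.2 (pow_lt_pow_left₀ hab ha.le two_ne_zero)).ne'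
  rw [besselQuotient, add_sub_mul_besselJ_div_eq_besselWronskian_div hj h_zero hJa hJb,
    besselWronskian_eq_integral ha (ha.trans hab) hj.le, div_div_eq_mul_div,
    mul_div_mul_left _ _ h_sq, mul_div_assoc]

lemma besselQuotient_le_besselQuotient (ha : 0 < a) (hab : a < b) (hbc : b < c) (hj : 0 < j)
    (h_zero : besselJ (a - 1) j = 0) (hJa : ∀ x ∈ Ioc 0 j, 0 < besselJ a x)
    (hJb : ∀ x ∈ Ioc 0 j, 0 < besselJ b x) (hJc : ∀ x ∈ Ioc 0 j, 0 < besselJ c x) :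
    besselQuotient a b j ≤ besselQuotient a c j := by
  have hj' : j ∈ Ioc 0 j := right_mem_Ioc.2 hj
  have h_int {d : ℝ} (hd : 0 < d) (hJd : ∀ x ∈ Ioc 0 j, 0 < besselJ d x) :
      0 < ∫ t in (0 : ℝ)..j, besselJ a t * besselJ d t / t :=
    integral_besselJ_mul_besselJ_div_pos (add_pos ha hd) hj
      (fun x hx ↦ hJa x (Ioo_subset_Ioc_self hx)) fun x hx ↦ hJd x (Ioo_subset_Ioc_self hx)
  have hb : 0 < b := ha.trans hab
  rw [besselQuotient_eq_div_integral ha hab hj h_zero (hJa j hj').ne' (hJb j hj').ne',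
    besselQuotient_eq_div_integral ha (hab.trans hbc) hj h_zero (hJa j hj').ne' (hJc j hj').ne']
  refine mul_le_mul_of_nonneg_left ?_ (hJa j hj').le
  rw [div_le_div_iff₀ (h_int hb hJb) (h_int (hb.trans hbc) hJc)]
  exact besselJ_mul_integral_le ha hb hbc hj hJa hJb hJc

lemma besselQuotient_add_one_right (ha : a ≠ 0) (hj : 0 < j) (h_zero : besselJ (a - 1) j = 0)
    (hJa : besselJ a j ≠ 0) :
    besselQuotient a (a + 1) j = 2 * a * (2 * a + 1) / (j ^ 2 - 2 * a) := by
  have h_denom : a + 1 + a - j * besselJ (a + 1 + 1) j / besselJ (a + 1) j =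
      (j ^ 2 - 2 * a) / (2 * a) := by
    rw [add_assoc a 1 1, one_add_one_eq_two, besselJ_add_two a hj,
      besselJ_add_one_of_besselJ_sub_one_eq_zero hj h_zero]
    field_simp
    ring
  rw [besselQuotient, h_denom, div_div_eq_mul_div]
  ring

end Comparison

/-! ### The sequence `Q_k` -/

lemma ballVol_pos (N : ℕ) : 0 < ballVol N :=
  ENNReal.toReal_pos (measure_ball_pos volume 0 one_pos).ne' measure_ball_lt_top.ne

lemma integral_mul_besselJ_sq_pos {ν : ℝ} (hν : -1 < ν) :
    0 < ∫ r in (0 : ℝ)..besselJzero ν, r * besselJ ν r ^ 2 := by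
  have h_pos := besselJzero_pos hν
  refine intervalIntegral.intervalIntegral_pos_of_pos_on ?_
    (fun r hr ↦ mul_pos hr.1 (pow_pos (besselJ_pos_of_lt_besselJzero hν hr) 2)) h_pos
  refine (intervalIntegrable_rpow_mul_besselJ_mul_besselJ (s := 1) (a := ν) (b := ν)
    (by linarith) h_pos.le).congr fun r _ ↦ ?_
  simp only [Real.rpow_one, sq]

section Qseq

variable {N : ℕ}

lemma neg_one_lt_natCast_div_two_sub_one (hN : 0 < N) : -1 < (N : ℝ) / 2 - 1 := by
  have : (0 : ℝ) < N := Nat.cast_pos.2 hN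
  linarith

lemma besselJ_natCast_add_pos (hN : 0 < N) {k : ℕ} (hk : 1 ≤ k) {x : ℝ}
    (hx : x ∈ Ioc 0 (besselJzero ((N : ℝ) / 2 - 1))) : 0 < besselJ (k + N / 2 - 1) x := by
  obtain ⟨n, rfl⟩ := Nat.exists_eq_add_of_le' hk
  convert besselJ_add_natCast_add_one_pos (neg_one_lt_natCast_div_two_sub_one hN) n hx using 2
  push_cast
  ring

lemma besselJ_natCast_div_two_pos (hN : 0 < N) {x : ℝ}
    (hx : x ∈ Ioc 0 (besselJzero ((N : ℝ) / 2 - 1))) : 0 < besselJ (N / 2) x := by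
  simpa using besselJ_natCast_add_pos hN le_rfl hx

lemma Qseq_eq_mul_besselQuotient (N k : ℕ) :
    Qseq N k = besselJzero ((N : ℝ) / 2 - 1) ^ 2 / (2 * N * ballVol N * GN N ^ 2) *
      besselQuotient (N / 2) (k + N / 2 - 1) (besselJzero ((N : ℝ) / 2 - 1)) := by
  rw [Qseq, besselQuotient, show (N : ℝ) ^ 2 / 4 = (N / 2) ^ 2 by ring]

lemma Qseq_le_Qseq_succ (hN : 0 < N) {k : ℕ} (hk : 2 ≤ k) : Qseq N k ≤ Qseq N (k + 1) := by
  have hν := neg_one_lt_natCast_div_two_sub_one hN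
  have hk' : (2 : ℝ) ≤ k := Nat.ofNat_le_cast.2 hk
  have hvol := ballVol_pos N
  simp only [Qseq_eq_mul_besselQuotient]
  refine mul_le_mul_of_nonneg_left ?_ (by positivity)
  exact besselQuotient_le_besselQuotient (by positivity) (by linarith) (by push_cast; linarith)
    (besselJzero_pos hν) (besselJ_besselJzero hν) (fun x ↦ besselJ_natCast_div_two_pos hN)
    (fun x ↦ besselJ_natCast_add_pos hN (by omega)) fun x ↦ besselJ_natCast_add_pos hN (by omega)

lemma besselJzero_sq_div_GN_sq (hN : 0 < N) :
    besselJzero ((N : ℝ) / 2 - 1) ^ 2 / (2 * N * ballVol N * GN N ^ 2) =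
      (∫ r in (0 : ℝ)..besselJzero ((N : ℝ) / 2 - 1), r * besselJ ((N : ℝ) / 2 - 1) r ^ 2) /
        (2 * (besselJzero ((N : ℝ) / 2 - 1) *
          deriv (besselJ ((N : ℝ) / 2 - 1)) (besselJzero ((N : ℝ) / 2 - 1))) ^ 2) := by
  have hν := neg_one_lt_natCast_div_two_sub_one hN
  have hvol := ballVol_pos N
  have hint := integral_mul_besselJ_sq_pos hν
  rw [GN, div_pow, Real.sq_sqrt (by positivity)]
  field_simp

lemma Qseq_two (hN : 0 < N) : Qseq N 2 = CN N := by
  have hν := neg_one_lt_natCast_div_two_sub_one hN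
  have hj := besselJzero_pos hν
  have h_quot : besselQuotient (N / 2) ((2 : ℕ) + N / 2 - 1) (besselJzero ((N : ℝ) / 2 - 1)) =
      N * (N + 1) / (besselJzero ((N : ℝ) / 2 - 1) ^ 2 - N) := by
    rw [show ((2 : ℕ) : ℝ) + N / 2 - 1 = N / 2 + 1 by push_cast; ring,
      besselQuotient_add_one_right (by positivity) hj (besselJ_besselJzero hν)
        (besselJ_natCast_div_two_pos hN (right_mem_Ioc.2 hj)).ne',
      mul_div_cancel₀ (N : ℝ) two_ne_zero]
  rw [Qseq_eq_mul_besselQuotient, h_quot, besselJzero_sq_div_GN_sq hN, div_mul_div_comm, CN,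
    mul_comm (∫ _ in _.._, _)]

lemma isLeast_Qseq_two (hN : 0 < N) :
    IsLeast {q : ℝ | ∃ k : ℕ, 2 ≤ k ∧ q = Qseq N k} (Qseq N 2) := by
  refine ⟨⟨2, le_rfl, rfl⟩, ?_⟩
  rintro _ ⟨k, hk, rfl⟩
  exact Nat.le_induction le_rfl (fun n hn ih ↦ ih.trans (Qseq_le_Qseq_succ hN hn)) k hk

end Qseq

end

theorem Qseq_monotone_and_inf_general (N : ℕ) (hN : 0 < N) :
    (∀ k : ℕ, 2 ≤ k → Qseq N k ≤ Qseq N (k + 1)) ∧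
    sInf {q : ℝ | ∃ k : ℕ, 2 ≤ k ∧ q = Qseq N k} = Qseq N 2 ∧
    Qseq N 2 = CN N :=
  ⟨fun _ ↦ Qseq_le_Qseq_succ hN, (isLeast_Qseq_two hN).csInf_eq, Qseq_two hN⟩

/-- **Lemma 2.3.**  For all `N ≥ 2` and integers `k ≥ 2`, `Q_k ≤ Q_{k+1}`; consequently
`inf_{k ≥ 2} Q_k = Q_2 = C_N`. -/
theorem Qseq_monotone_and_inf (N : ℕ) (hN : 2 ≤ N) :
    (∀ k : ℕ, 2 ≤ k → Qseq N k ≤ Qseq N (k + 1)) ∧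
    sInf {q : ℝ | ∃ k : ℕ, 2 ≤ k ∧ q = Qseq N k} = Qseq N 2 ∧
    Qseq N 2 = CN N :=
  Qseq_monotone_and_inf_general N (zero_lt_two.trans_le hN)
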